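/- arXiv:2408.16994 — 3 statements merged into one kernel-verified Lean document; each statement's English description precedes it below -/
import Mathlib

section
/- Let H be a complex separable Hilbert space and let A be a compact bounded linear operator on H. Then the sequence of positive operators (|A^n|^{1/n})_{n≥1} converges in operator norm to a positive compact operator B on H. -/
/-!
The proof describes the spectral subspaces of `|A ^ n| ^ (1 / n)` for large `n` directly from `A`.
For `s ≥ 0` let `W s` (`domSub A s`) be the space of vectors `v` such that
`s ^ n * |⟪v, x⟫| ≤ C * ‖A ^ n x‖` for some `C` and all `n`, `x`. It is antitone in `s`, equals `⊤`
at `s = 0` and `⊥` for `s > ‖A‖`, is invariant under `A*`, and contains every `v` that is an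
eigenvector of `A*` modulo `W s` with eigenvalue of modulus `> s` (`mem_domSub_of_eigen`).

Compactness enters through a dichotomy (`eigen_or_growth`). For an `A*`-invariant subspace `M` with
projection `P` onto `Mᗮ`, either the compact operator `P A*` has an eigenvalue of modulus `> s`, or
the spectral radius of `A P` is at most `s` and `‖A ^ n x‖ ≤ C t ^ n ‖x‖` on `Mᗮ` for each `t > s`.
Riesz' argument then shows that `W s` is finite-dimensional for `s > 0`
(`finiteDimensional_domSub`), so the constant `C` in its definition can be chosen uniformly
(`domSub_lower`). Applied to `M = W s`, where the first alternative is impossible, the dichotomy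
gives the growth bound on `(W s)ᗮ` (`domSub_orthogonal_growth`).

Let `E j` be the projection onto `W (j δ)` and `D = ∑ j, j δ (E j - E (j + 1))`, a finite-rank
operator. The two bounds say that `K⁻¹ D ^ (2 n) ≤ (A ^ n)* A ^ n ≤ K (D + 2 δ) ^ (2 n)` with `K`
independent of `n`. Since `t ↦ t ^ (1 / (2 n))` is operator monotone and `K ^ (1 / (2 n)) → 1`,
`|A ^ n| ^ (1 / n)` is eventually within `3 δ` of `D` (`exists_approx`). As `δ` is arbitrary, the
sequence is Cauchy, and its limit is positive and a norm limit of compact operators.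
-/

open scoped NNReal InnerProductSpace
open Filter Topology

/-- The absolute value `|T| = (T*T)^{1/2}` of a bounded operator on a complex Hilbert space. -/
noncomputable def opAbs {H : Type*} [NormedAddCommGroup H] [InnerProductSpace ℂ H]
    [CompleteSpace H] (T : H →L[ℂ] H) : H →L[ℂ] H :=
  CFC.sqrt (ContinuousLinearMap.adjoint T * T)

/-- `|T ^ n| ^ (1 / n)`, via the continuous functional calculus. -/
noncomputable def absPow {H : Type*} [NormedAddCommGroup H] [InnerProductSpace ℂ H]
    [CompleteSpace H] (T : H →L[ℂ] H) (n : ℕ) : H →L[ℂ] H :=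
  CFC.nnrpow (opAbs (T ^ n)) ((n : ℝ≥0))⁻¹

/-! ### Vectors dominated along orbits -/

/-- The vectors `v` for which the functional `⟪v, ·⟫` is dominated along the orbits of `A`
at exponential rate `s`. The constant `C` may depend on `v` but not on `n` and `x`; only `s ≥ 0` is of
interest. -/
def domSub {H : Type*} [NormedAddCommGroup H] [InnerProductSpace ℂ H]
    (A : H →L[ℂ] H) (s : ℝ) : Submodule ℂ H where
  carrier := {v | ∃ C : ℝ, ∀ (n : ℕ) (x : H), s ^ n * ‖⟪v, x⟫_ℂ‖ ≤ C * ‖(A ^ n) x‖}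
  zero_mem' := ⟨0, by simp⟩
  add_mem' := by
    rintro v w ⟨C, hC⟩ ⟨D, hD⟩
    refine ⟨|C| + |D|, fun n x => ?_⟩
    have hC' := (hC n x).trans (mul_le_mul_of_nonneg_right (le_abs_self C) (norm_nonneg _))
    have hD' := (hD n x).trans (mul_le_mul_of_nonneg_right (le_abs_self D) (norm_nonneg _))
    rw [inner_add_left]
    rcases le_total 0 (s ^ n) with h | h
    · have := mul_le_mul_of_nonneg_left (norm_add_le ⟪v, x⟫_ℂ ⟪w, x⟫_ℂ) h
      linarith
    · exact (mul_nonpos_of_nonpos_of_nonneg h (norm_nonneg _)).trans (by positivity)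
  smul_mem' := by
    rintro c v ⟨C, hC⟩
    refine ⟨‖c‖ * C, fun n x => ?_⟩
    have := mul_le_mul_of_nonneg_left (hC n x) (norm_nonneg c)
    rw [inner_smul_left, norm_mul, RCLike.norm_conj]
    linarith

section
variable {H : Type*} [NormedAddCommGroup H] [InnerProductSpace ℂ H]

lemma mem_domSub {A : H →L[ℂ] H} {s : ℝ} {v : H} :
    v ∈ domSub A s ↔
      ∃ C : ℝ, ∀ (n : ℕ) (x : H), s ^ n * ‖⟪v, x⟫_ℂ‖ ≤ C * ‖(A ^ n) x‖ := Iff.rfl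

lemma domSub_antitone (A : H →L[ℂ] H) {s t : ℝ} (hs : 0 ≤ s) (hst : s ≤ t) :
    domSub A t ≤ domSub A s := by
  rintro v ⟨C, hC⟩
  refine ⟨C, fun n x => le_trans ?_ (hC n x)⟩
  gcongr

lemma domSub_zero (A : H →L[ℂ] H) : domSub A 0 = ⊤ := by
  refine eq_top_iff.2 fun v _ => ⟨‖v‖, fun n x => ?_⟩
  rcases n with _ | n
  · simpa using norm_inner_le_norm v x
  · simp; positivity

lemma domSub_eq_bot {A : H →L[ℂ] H} {s : ℝ} (h : ‖A‖ < s) : domSub A s = ⊥ := by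
  refine eq_bot_iff.2 fun v hv => ?_
  obtain ⟨C, hC⟩ := hv
  have hs : 0 < s := (norm_nonneg A).trans_lt h
  have h1 : ∀ n : ℕ, ‖⟪v, v⟫_ℂ‖ ≤ |C| * ‖v‖ * (‖A‖ / s) ^ n := by
    intro n
    have h2 : ‖(A ^ n) v‖ ≤ ‖A‖ ^ n * ‖v‖ := by
      rcases n with _ | n
      · simp
      · exact (ContinuousLinearMap.le_opNorm _ _).trans (by gcongr; exact norm_pow_le' _ (by simp))
    have h3 : s ^ n * ‖⟪v, v⟫_ℂ‖ ≤ |C| * (‖A‖ ^ n * ‖v‖) :=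
      (hC n v).trans (by gcongr; exact le_abs_self C)
    rw [div_pow, mul_div_assoc', le_div_iff₀ (by positivity)]
    linarith
  have h4 : Tendsto (fun n : ℕ => |C| * ‖v‖ * (‖A‖ / s) ^ n) atTop (𝓝 (|C| * ‖v‖ * 0)) :=
    (tendsto_pow_atTop_nhds_zero_of_lt_one (by positivity) ((div_lt_one hs).2 h)).const_mul _
  rw [mul_zero] at h4
  have h5 := ge_of_tendsto' h4 h1
  simpa using h5

/-- If `A` grows on `Mᗮ` at a rate `t < s`, then vectors dominated at rate `s` are orthogonal
to `Mᗮ`. -/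
lemma domSub_le_of_growth {A : H →L[ℂ] H} {t s C : ℝ} (ht : 0 < t) (hts : t < s)
    (M : Submodule ℂ H) [M.HasOrthogonalProjection]
    (h : ∀ (n : ℕ), ∀ x ∈ Mᗮ, ‖(A ^ n) x‖ ≤ C * t ^ n * ‖x‖) : domSub A s ≤ M := by
  rintro v ⟨D, hD⟩
  rw [← Submodule.orthogonal_orthogonal M, Submodule.mem_orthogonal']
  intro x hx
  have hs : 0 < s := ht.trans hts
  have h1 : ∀ n : ℕ, ‖⟪v, x⟫_ℂ‖ ≤ |D| * |C| * ‖x‖ * (t / s) ^ n := by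
    intro n
    have h3 : s ^ n * ‖⟪v, x⟫_ℂ‖ ≤ |D| * (|C| * t ^ n * ‖x‖) := by
      refine (hD n x).trans ?_
      gcongr
      · exact le_abs_self D
      · refine (h n x hx).trans ?_
        gcongr
        exact le_abs_self C
    rw [div_pow, mul_div_assoc', le_div_iff₀ (by positivity)]
    linarith
  have h4 : Tendsto (fun n : ℕ => |D| * |C| * ‖x‖ * (t / s) ^ n) atTop
      (𝓝 (|D| * |C| * ‖x‖ * 0)) :=
    (tendsto_pow_atTop_nhds_zero_of_lt_one (by positivity) ((div_lt_one hs).2 hts)).const_mul _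
  rw [mul_zero] at h4
  simpa using ge_of_tendsto' h4 h1

variable [CompleteSpace H]

local notation "adj" => ContinuousLinearMap.adjoint

lemma adjoint_mem_domSub {A : H →L[ℂ] H} {s : ℝ} {v : H} (hv : v ∈ domSub A s) :
    adj A v ∈ domSub A s := by
  obtain ⟨C, hC⟩ := hv
  refine ⟨|C| * ‖A‖, fun n x => ?_⟩
  rw [ContinuousLinearMap.adjoint_inner_left]
  refine (hC n (A x)).trans ?_
  have : (A ^ n) (A x) = A ((A ^ n) x) := by
    rw [← mul_apply_eq_comp, ← pow_succ, pow_succ', mul_apply_eq_comp]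
  rw [this, mul_assoc]
  gcongr
  · exact le_abs_self C
  · exact A.le_opNorm _

/-- Eigenvectors of `A*` modulo `domSub A s` with eigenvalue of modulus `> s` lie in `domSub A s`:
with `w = A* v - μ v`, the identity `μ ⟪x, v⟫ = ⟪A x, v⟫ - ⟪x, w⟫` gives the bound by induction
on `n`. -/
lemma mem_domSub_of_eigen {A : H →L[ℂ] H} {s : ℝ} (hs : 0 ≤ s) {v : H} {μ : ℂ} (hμ : s < ‖μ‖)
    (h : adj A v - μ • v ∈ domSub A s) : v ∈ domSub A s := by
  obtain ⟨C, hC⟩ := h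
  set w := adj A v - μ • v with hw
  -- `D` is chosen so that `s * D + C ≤ ‖μ‖ * D`, which closes the induction
  set D := max ‖v‖ (C / (‖μ‖ - s)) with hD
  have hD1 : s * D + C ≤ ‖μ‖ * D := by
    have := (div_le_iff₀ (sub_pos.2 hμ)).1 (le_max_right ‖v‖ (C / (‖μ‖ - s)))
    linarith
  refine ⟨D, fun n => ?_⟩
  induction n with
  | zero =>
    intro x
    simp only [pow_zero, one_mul, one_apply_eq_self]
    exact (norm_inner_le_norm v x).trans (by gcongr; exact le_max_left _ _)
  | succ n ih =>
    intro x
    have hμ0 : 0 < ‖μ‖ := hs.trans_lt hμ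
    have h1 : ‖μ‖ * ‖⟪v, x⟫_ℂ‖ ≤ ‖⟪v, A x⟫_ℂ‖ + ‖⟪w, x⟫_ℂ‖ := by
      have : ⟪μ • v, x⟫_ℂ = ⟪v, A x⟫_ℂ - ⟪w, x⟫_ℂ := by
        rw [hw, inner_sub_left, ContinuousLinearMap.adjoint_inner_left]; ring
      rw [← RCLike.norm_conj μ, ← norm_mul, ← inner_smul_left, this]
      exact norm_sub_le _ _
    have h2 := ih (A x)
    have h3 := hC (n + 1) x
    have h4 : (A ^ n) (A x) = (A ^ (n + 1)) x := by rw [pow_succ, mul_apply_eq_comp]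
    rw [h4] at h2
    refine le_of_mul_le_mul_left ?_ hμ0
    calc ‖μ‖ * (s ^ (n + 1) * ‖⟪v, x⟫_ℂ‖) = s ^ (n + 1) * (‖μ‖ * ‖⟪v, x⟫_ℂ‖) := by ring
      _ ≤ s ^ (n + 1) * (‖⟪v, A x⟫_ℂ‖ + ‖⟪w, x⟫_ℂ‖) := by gcongr
      _ = s * (s ^ n * ‖⟪v, A x⟫_ℂ‖) + s ^ (n + 1) * ‖⟪w, x⟫_ℂ‖ := by ring
      _ ≤ s * (D * ‖(A ^ (n + 1)) x‖) + C * ‖(A ^ (n + 1)) x‖ := by gcongr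
      _ = (s * D + C) * ‖(A ^ (n + 1)) x‖ := by ring
      _ ≤ (‖μ‖ * D) * ‖(A ^ (n + 1)) x‖ := by gcongr
      _ = _ := by ring

/-! ### Compactness: growth dichotomy and finite dimension -/

/-- Schauder's theorem in a Hilbert space: the adjoint of a compact operator is compact. It rests
on `‖A* z‖² = ⟪A A* z, z⟫`. -/
lemma isCompactOperator_adjoint {A : H →L[ℂ] H} (hA : IsCompactOperator A) :
    IsCompactOperator (adj A) := by
  have hAA : IsCompactOperator (A ∘L adj A) := hA.comp_clm (adj A)
  change IsCompactOperator ((adj A : H →L[ℂ] H) : H →ₗ[ℂ] H)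
  rw [isCompactOperator_iff_isCompact_closure_image_closedBall _ zero_lt_one]
  refine TotallyBounded.isCompact_of_isClosed (TotallyBounded.closure ?_) isClosed_closure
  have htb : TotallyBounded ((A ∘L adj A) '' Metric.closedBall 0 1) :=
    (hAA.isCompact_closure_image_closedBall 1).totallyBounded.subset subset_closure
  rw [Metric.totallyBounded_iff]
  intro ε hε
  obtain ⟨t, hts, htf, ht⟩ := Metric.finite_approx_of_totallyBounded htb (ε ^ 2 / 2) (by positivity)
  obtain ⟨u, hus, huf, hut⟩ := Set.exists_subset_image_finite_and.1 ⟨t, hts, htf, rfl⟩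
  subst hut
  refine ⟨adj A '' u, huf.image _, ?_⟩
  rintro _ ⟨x, hx, rfl⟩
  have := ht ⟨x, hx, rfl⟩
  simp only [Set.mem_iUnion, Set.biUnion_image, exists_prop] at this ⊢
  obtain ⟨y, hy, hxy⟩ := this
  refine ⟨y, hy, ?_⟩
  have hy1 := hus hy
  rw [Metric.mem_ball, dist_eq_norm] at hxy ⊢
  rw [mem_closedBall_zero_iff] at hx hy1
  have h1 : ‖adj A (x - y)‖ ^ 2 ≤ ‖(A ∘L adj A) x - (A ∘L adj A) y‖ * ‖x - y‖ := by
    rw [← map_sub, ContinuousLinearMap.comp_apply]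
    have : ⟪A (adj A (x - y)), x - y⟫_ℂ = (‖adj A (x - y)‖ : ℂ) ^ 2 := by
      rw [← ContinuousLinearMap.adjoint_inner_right, inner_self_eq_norm_sq_to_K]; rfl
    have h2 := norm_inner_le_norm (𝕜 := ℂ) (A (adj A (x - y))) (x - y)
    rw [this] at h2
    simpa using h2
  have h3 : ‖x - y‖ ≤ 2 := (norm_sub_le _ _).trans (by linarith)
  have h4 : ‖adj A (x - y)‖ ^ 2 < ε ^ 2 := by
    nlinarith [norm_nonneg (x - y), norm_nonneg ((A ∘L adj A) x - (A ∘L adj A) y)]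
  have h5 := lt_of_pow_lt_pow_left₀ 2 hε.le h4
  rw [map_sub] at h5
  exact h5

/-- Gelfand's spectral radius formula as a growth bound on powers. -/
lemma exists_norm_pow_le {T : H →L[ℂ] H} {s t : ℝ} (hs : 0 ≤ s) (hst : s < t)
    (h : ∀ μ ∈ spectrum ℂ T, ‖μ‖ ≤ s) : ∃ C : ℝ, 0 ≤ C ∧ ∀ n : ℕ, ‖T ^ n‖ ≤ C * t ^ n := by
  have ht : 0 < t := hs.trans_lt hst
  have h1 : spectralRadius ℂ T < ENNReal.ofReal t := by
    refine lt_of_le_of_lt (iSup₂_le fun μ hμ => ?_) ((ENNReal.ofReal_lt_ofReal_iff ht).2 hst)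
    rw [← enorm_eq_nnnorm, ← ofReal_norm]
    exact ENNReal.ofReal_le_ofReal (h μ hμ)
  have h2 := (spectrum.pow_norm_pow_one_div_tendsto_nhds_spectralRadius T).eventually_lt_const h1
  have h3 : (fun n : ℕ => T ^ n) =O[atTop] fun n : ℕ => t ^ n := by
    refine Asymptotics.IsBigO.of_bound 1 ?_
    filter_upwards [h2, eventually_ge_atTop 1] with n hn hn1
    have h4 := (ENNReal.ofReal_lt_ofReal_iff ht).1 hn
    have hn0 : n ≠ 0 := by omega
    have h5 := pow_le_pow_left₀ (by positivity) h4.le n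
    rw [one_div, Real.rpow_inv_natCast_pow (norm_nonneg _) hn0] at h5
    rw [one_mul, Real.norm_of_nonneg (by positivity)]
    exact h5
  obtain ⟨C, hC, hC'⟩ := Asymptotics.bound_of_isBigO_nat_atTop h3
  refine ⟨C, hC.le, fun n => ?_⟩
  have := hC' (x := n) (by positivity)
  rwa [Real.norm_of_nonneg (by positivity)] at this

/-- Dichotomy for an `A*`-invariant subspace `M`: either it can be enlarged by an eigenvector of
`A*` modulo `M` with large eigenvalue, or `A` has small growth on `Mᗮ`. The second alternative is
Gelfand's formula for `A P`, `P` the projection onto `Mᗮ`; if it fails, the Fredholm alternative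
for the compact operator `P A*` gives the first. -/
lemma eigen_or_growth {A : H →L[ℂ] H} (hA : IsCompactOperator A) {s : ℝ} (hs : 0 < s)
    (M : Submodule ℂ H) [M.HasOrthogonalProjection] (hM : ∀ v ∈ M, adj A v ∈ M) :
    (∃ (v : H) (μ : ℂ), v ∈ Mᗮ ∧ ‖v‖ = 1 ∧ s < ‖μ‖ ∧ adj A v - μ • v ∈ M) ∨
      ∀ t > s, ∃ C : ℝ, 0 ≤ C ∧ ∀ (n : ℕ), ∀ x ∈ Mᗮ, ‖(A ^ n) x‖ ≤ C * t ^ n * ‖x‖ := by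
  set P := Mᗮ.starProjection with hP
  have hAM : ∀ x ∈ Mᗮ, A x ∈ Mᗮ := by
    intro x hx
    rw [Submodule.mem_orthogonal] at hx ⊢
    intro u hu
    rw [← ContinuousLinearMap.adjoint_inner_left]
    exact hx _ (hM u hu)
  by_cases hsp : ∀ μ ∈ spectrum ℂ (A * P), ‖μ‖ ≤ s
  · right
    intro t ht
    obtain ⟨C, hC0, hC⟩ := exists_norm_pow_le hs.le ht hsp
    refine ⟨C, hC0, fun n x hx => ?_⟩
    have h1 : ∀ n : ℕ, ((A * P) ^ n) x = (A ^ n) x ∧ (A ^ n) x ∈ Mᗮ := by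
      intro n
      induction n with
      | zero => simpa using hx
      | succ n ih =>
        rw [pow_succ', pow_succ', mul_apply_eq_comp, mul_apply_eq_comp, mul_apply_eq_comp, ih.1,
          Submodule.starProjection_eq_self_iff.2 ih.2]
        exact ⟨rfl, hAM _ ih.2⟩
    rw [← (h1 n).1]
    exact (ContinuousLinearMap.le_opNorm _ _).trans (by gcongr; exact hC n)
  · left
    push Not at hsp
    obtain ⟨l, hl, hsl⟩ := hsp
    have hstar : star (A * P) = P * adj A := by
      rw [star_mul, ContinuousLinearMap.star_eq_adjoint A, hP,
        (isSelfAdjoint_starProjection Mᗮ).star_eq]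
    have hmem : star l ∈ spectrum ℂ (P * adj A) := by
      rw [← hstar, spectrum.map_star]
      simpa using hl
    have hl0 : star l ≠ 0 := by
      intro h0
      rw [star_eq_zero] at h0
      rw [h0, norm_zero] at hsl
      exact absurd hsl hs.not_gt
    have hc : IsCompactOperator (P * adj A) := (isCompactOperator_adjoint hA).clm_comp P
    obtain ⟨v, hv⟩ := ((hc.hasEigenvalue_iff_mem_spectrum hl0).2 hmem).exists_hasEigenvector
    have hv0 : v ≠ 0 := hv.2
    have hv1 : P (adj A v) = star l • v := hv.apply_eq_smul
    have hvM : v ∈ Mᗮ := by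
      have : v = (star l)⁻¹ • P (adj A v) := by rw [hv1, inv_smul_smul₀ hl0]
      rw [this]
      exact Submodule.smul_mem _ _ (Submodule.starProjection_apply_mem _ _)
    refine ⟨((‖v‖⁻¹ : ℝ) : ℂ) • v, star l, Submodule.smul_mem _ _ hvM, ?_, by simpa using hsl, ?_⟩
    · rw [norm_smul]
      simp [hv0]
    · rw [map_smul, smul_comm, ← smul_sub, ← hv1]
      refine Submodule.smul_mem _ _ ?_
      have := Submodule.sub_starProjection_mem_orthogonal (K := Mᗮ) (adj A v)
      rwa [Submodule.orthogonal_orthogonal] at this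

/-- Riesz' argument: if `domSub A s` had infinite dimension, repeated enlargement inside
`domSub A (s / 3)` would give unit vectors `v n` whose images `A* (v n)` are uniformly separated. -/
lemma finiteDimensional_domSub {A : H →L[ℂ] H} (hA : IsCompactOperator A) {s : ℝ} (hs : 0 < s) :
    FiniteDimensional ℂ (domSub A s) := by
  by_contra hinf
  let 𝓜 := {M : Submodule ℂ H // FiniteDimensional ℂ M ∧ (∀ v ∈ M, adj A v ∈ M) ∧
    M ≤ domSub A (s / 3)}
  have hex : ∀ M : 𝓜, ∃ (v : H) (μ : ℂ),
      v ∈ M.1ᗮ ∧ ‖v‖ = 1 ∧ s / 3 < ‖μ‖ ∧ adj A v - μ • v ∈ M.1 := by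
    rintro ⟨M, hfd, hinv, hle⟩
    rcases eigen_or_growth hA (s := s / 3) (by positivity) M hinv with h | h
    · exact h
    · obtain ⟨C, -, hC⟩ := h (s / 2) (by linarith)
      have := domSub_le_of_growth (s := s) (by positivity) (by linarith) M hC
      exact absurd (Submodule.finiteDimensional_of_le this) hinf
  choose v μ hv1 hv2 hv3 hv4 using hex
  have hnext : ∀ M : 𝓜, FiniteDimensional ℂ (M.1 ⊔ ℂ ∙ v M : Submodule ℂ H) ∧
      (∀ w ∈ M.1 ⊔ ℂ ∙ v M, adj A w ∈ M.1 ⊔ ℂ ∙ v M) ∧ M.1 ⊔ ℂ ∙ v M ≤ domSub A (s / 3) := by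
    intro M
    have := M.2.1
    refine ⟨inferInstance, ?_, sup_le M.2.2.2 ?_⟩
    · intro w hw
      obtain ⟨m, hm, c, hc, rfl⟩ := Submodule.mem_sup.1 hw
      obtain ⟨a, rfl⟩ := Submodule.mem_span_singleton.1 hc
      have hAv : adj A (v M) ∈ M.1 ⊔ ℂ ∙ v M := by
        have : adj A (v M) = (adj A (v M) - μ M • v M) + μ M • v M := by abel
        rw [this]
        exact Submodule.add_mem_sup (hv4 M)
          (Submodule.smul_mem _ _ (Submodule.mem_span_singleton_self _))
      rw [map_add, map_smul]
      exact Submodule.add_mem _ (Submodule.mem_sup_left (M.2.2.1 m hm))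
        (Submodule.smul_mem _ _ hAv)
    · rw [Submodule.span_singleton_le_iff_mem]
      exact mem_domSub_of_eigen (by positivity) (hv3 M) (M.2.2.2 (hv4 M))
  let next : 𝓜 → 𝓜 := fun M => ⟨M.1 ⊔ ℂ ∙ v M, hnext M⟩
  let F : ℕ → 𝓜 := fun n => next^[n] ⟨⊥, inferInstance, by simp, bot_le⟩
  have hF : ∀ n, (F (n + 1)).1 = (F n).1 ⊔ ℂ ∙ v (F n) := by
    intro n
    simp only [F, Function.iterate_succ_apply', next]
  have hmono : Monotone fun n => (F n).1 :=
    monotone_nat_of_le_succ fun n => by rw [hF]; exact le_sup_left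
  have hsep : ∀ m n, m < n → s / 3 ≤ ‖adj A (v (F n)) - adj A (v (F m))‖ := by
    intro m n hmn
    have h1 : adj A (v (F m)) ∈ (F n).1 := by
      refine (F n).2.2.1 _ (hmono (Nat.succ_le_of_lt hmn) ?_)
      show _ ∈ (F (m + 1)).1
      rw [hF]
      exact Submodule.mem_sup_right (Submodule.mem_span_singleton_self _)
    have h2 : ⟪v (F n), adj A (v (F n)) - adj A (v (F m))⟫_ℂ = μ (F n) := by
      have h3 := (Submodule.mem_orthogonal' _ _).1 (hv1 (F n)) _
        (Submodule.sub_mem _ (hv4 (F n)) h1)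
      rw [sub_right_comm, inner_sub_right, inner_smul_right, inner_self_eq_norm_sq_to_K, hv2,
        sub_eq_zero] at h3
      simpa [inner_sub_right] using h3
    have h4 := norm_inner_le_norm (𝕜 := ℂ) (v (F n)) (adj A (v (F n)) - adj A (v (F m)))
    rw [h2, hv2, one_mul] at h4
    exact (hv3 _).le.trans h4
  obtain ⟨K, hK, hK'⟩ := (isCompactOperator_adjoint hA).image_closedBall_subset_compact
    (f := ((adj A : H →L[ℂ] H) : H →ₗ[ℂ] H)) 1
  obtain ⟨y, -, ψ, hψ, hψy⟩ := hK.tendsto_subseq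
    (fun n => hK' ⟨v (F n), by simp [hv2], rfl⟩)
  obtain ⟨N, hN⟩ := Metric.cauchySeq_iff'.1 hψy.cauchySeq (s / 3) (by positivity)
  have h5 := hN (N + 1) (by omega)
  rw [dist_eq_norm] at h5
  exact absurd h5 (hsep _ _ (hψ (Nat.lt_succ_self N))).not_gt

/-- The eigenvector alternative of `eigen_or_growth` is excluded for `M = domSub A s`, since this
space already contains all such vectors. -/
lemma domSub_orthogonal_growth {A : H →L[ℂ] H} (hA : IsCompactOperator A) {s t : ℝ} (hs : 0 < s)
    (hst : s < t) : ∃ C : ℝ, 0 ≤ C ∧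
      ∀ (n : ℕ), ∀ x ∈ (domSub A s)ᗮ, ‖(A ^ n) x‖ ≤ C * t ^ n * ‖x‖ := by
  have := finiteDimensional_domSub hA hs
  rcases eigen_or_growth hA hs (domSub A s) (fun v hv => adjoint_mem_domSub hv) with h | h
  · obtain ⟨v, μ, hv, hv1, hμ, h⟩ := h
    have h0 : ⟪v, v⟫_ℂ = 0 :=
      (Submodule.mem_orthogonal _ _).1 hv v (mem_domSub_of_eigen hs.le hμ h)
    rw [inner_self_eq_zero] at h0
    simp [h0] at hv1
  · exact h t hst

lemma hasOrthogonalProjection_domSub {A : H →L[ℂ] H} (hA : IsCompactOperator A) {s : ℝ}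
    (hs : 0 ≤ s) : (domSub A s).HasOrthogonalProjection := by
  rcases hs.eq_or_lt with rfl | hs
  · rw [domSub_zero]; infer_instance
  · have := finiteDimensional_domSub hA hs
    infer_instance

/-- By finite dimension, the constant in the definition of `domSub A s` can be chosen uniformly over
its unit ball. The case `n = 0` is excluded because `0 ^ 0 = 1` when `s = 0`. -/
lemma domSub_lower {A : H →L[ℂ] H} (hA : IsCompactOperator A) {s : ℝ} (hs : 0 ≤ s)
    [(domSub A s).HasOrthogonalProjection] : ∃ C : ℝ, 0 ≤ C ∧ ∀ (n : ℕ) (x : H), n ≠ 0 →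
      s ^ n * ‖(domSub A s).starProjection x‖ ≤ C * ‖(A ^ n) x‖ := by
  rcases hs.eq_or_lt with rfl | hs
  · exact ⟨0, le_rfl, fun n x hn => by simp [hn]⟩
  · have := finiteDimensional_domSub hA hs
    let b := stdOrthonormalBasis ℂ (domSub A s)
    choose C hC using fun i => (b i).2
    refine ⟨∑ i, |C i|, by positivity, fun n x _ => ?_⟩
    rw [b.starProjection_eq_sum_rankOne]
    simp only [_root_.sum_apply, InnerProductSpace.rankOne_apply]
    refine (mul_le_mul_of_nonneg_left (norm_sum_le _ _) (by positivity)).trans ?_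
    rw [Finset.mul_sum, Finset.sum_mul]
    refine Finset.sum_le_sum fun i _ => ?_
    have h1 : ‖((b i : domSub A s) : H)‖ = 1 := b.orthonormal.1 i
    rw [norm_smul, h1, mul_one]
    exact (hC i n x).trans (by gcongr; exact le_abs_self _)

/-! ### Step operators built from a decreasing chain of projections -/

/-- The operator `∑ j < N, a j • (E j - E (j + 1))`. -/
noncomputable def stepOp (E : ℕ → H →L[ℂ] H) (N : ℕ) (a : ℕ → ℝ) : H →L[ℂ] H :=
  ∑ j ∈ Finset.range N, a j • (E j - E (j + 1))

/-- A chain of orthogonal projections decreasing from `1` to `0` in `N` steps. -/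
structure IsProjChain (E : ℕ → H →L[ℂ] H) (N : ℕ) : Prop where
  selfAdjoint : ∀ j, IsSelfAdjoint (E j)
  mul_eq : ∀ i j, i ≤ j → E i * E j = E j
  mul_eq' : ∀ i j, i ≤ j → E j * E i = E j
  zero : E 0 = 1
  last : E N = 0

namespace IsProjChain

variable {E : ℕ → H →L[ℂ] H} {N : ℕ}

lemma block_mul (hE : IsProjChain E N) (i j : ℕ) :
    (E i - E (i + 1)) * (E j - E (j + 1)) = if i = j then E i - E (i + 1) else 0 := by
  rw [mul_sub, sub_mul, sub_mul]
  rcases lt_trichotomy i j with h | rfl | h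
  · rw [hE.mul_eq i j h.le, hE.mul_eq (i + 1) j h, hE.mul_eq i (j + 1) (by omega),
      hE.mul_eq (i + 1) (j + 1) (by omega), if_neg h.ne]
    abel
  · rw [hE.mul_eq i i le_rfl, hE.mul_eq' i (i + 1) (by omega), hE.mul_eq i (i + 1) (by omega),
      hE.mul_eq (i + 1) (i + 1) le_rfl, if_pos rfl]
    abel
  · rw [hE.mul_eq' j i h.le, hE.mul_eq' j (i + 1) (by omega), hE.mul_eq' (j + 1) i h,
      hE.mul_eq' (j + 1) (i + 1) (by omega), if_neg h.ne']
    abel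

lemma sum_block (hE : IsProjChain E N) : ∑ j ∈ Finset.range N, (E j - E (j + 1)) = 1 := by
  rw [Finset.sum_range_sub', hE.zero, hE.last, sub_zero]

lemma re_inner_block (hE : IsProjChain E N) (j : ℕ) (x : H) :
    (⟪(E j - E (j + 1)) x, x⟫_ℂ).re = ‖(E j - E (j + 1)) x‖ ^ 2 := by
  have h1 : (E j - E (j + 1)) x = (E j - E (j + 1)) ((E j - E (j + 1)) x) := by
    rw [← mul_apply_eq_comp, hE.block_mul, if_pos rfl]
  have h2 : adj (E j - E (j + 1)) = E j - E (j + 1) :=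
    ((hE.selfAdjoint j).sub (hE.selfAdjoint (j + 1))).adjoint_eq
  have h3 : ⟪(E j - E (j + 1)) x, x⟫_ℂ = ⟪(E j - E (j + 1)) x, (E j - E (j + 1)) x⟫_ℂ := by
    conv_lhs => rw [h1]
    nth_rewrite 1 [← h2]
    rw [ContinuousLinearMap.adjoint_inner_left]
  rw [h3, inner_self_eq_norm_sq_to_K]
  norm_cast

lemma norm_block_le (hE : IsProjChain E N) (j : ℕ) (x : H) :
    ‖(E j - E (j + 1)) x‖ ≤ ‖x‖ := by
  have h1 := (Complex.re_le_norm _).trans (norm_inner_le_norm (𝕜 := ℂ) ((E j - E (j + 1)) x) x)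
  rw [hE.re_inner_block] at h1
  by_contra! h
  nlinarith [norm_nonneg x]

lemma norm_block_le' (hE : IsProjChain E N) (j : ℕ) (x : H) :
    ‖(E j - E (j + 1)) x‖ ≤ ‖E j x‖ := by
  have h1 : (E j - E (j + 1)) x = (E j - E (j + 1)) (E j x) := by
    rw [← mul_apply_eq_comp, sub_mul, hE.mul_eq j j le_rfl, hE.mul_eq' j (j + 1) (by omega)]
  rw [h1]
  exact hE.norm_block_le j _

lemma stepOp_mul (hE : IsProjChain E N) (a b : ℕ → ℝ) :
    stepOp E N a * stepOp E N b = stepOp E N (fun j => a j * b j) := by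
  simp only [stepOp, Finset.sum_mul_sum, smul_mul_smul_comm, hE.block_mul]
  refine Finset.sum_congr rfl fun i hi => ?_
  simp [Finset.mem_range.1 hi]

lemma stepOp_pow (hE : IsProjChain E N) (a : ℕ → ℝ) (n : ℕ) :
    stepOp E N a ^ n = stepOp E N (fun j => a j ^ n) := by
  induction n with
  | zero => simp [stepOp, hE.sum_block]
  | succ n ih => rw [pow_succ, ih, hE.stepOp_mul]; simp only [pow_succ]

lemma stepOp_const (hE : IsProjChain E N) (c : ℝ) : stepOp E N (fun _ => c) = c • 1 := by
  rw [stepOp, ← Finset.smul_sum, hE.sum_block]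

lemma stepOp_isSelfAdjoint (hE : IsProjChain E N) (a : ℕ → ℝ) : IsSelfAdjoint (stepOp E N a) := by
  rw [isSelfAdjoint_iff, stepOp, star_sum]
  refine Finset.sum_congr rfl fun j _ => ?_
  rw [← Complex.coe_smul, star_smul, ((hE.selfAdjoint j).sub (hE.selfAdjoint (j + 1))).star_eq]
  simp

lemma re_inner_stepOp (hE : IsProjChain E N) (a : ℕ → ℝ) (x : H) :
    (⟪stepOp E N a x, x⟫_ℂ).re =
      ∑ j ∈ Finset.range N, a j * ‖(E j - E (j + 1)) x‖ ^ 2 := by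
  simp only [stepOp, _root_.sum_apply, sum_inner, Complex.re_sum]
  refine Finset.sum_congr rfl fun j _ => ?_
  rw [← hE.re_inner_block, _root_.smul_apply, ← Complex.coe_smul, inner_smul_left]
  simp [inner_sub_left]

lemma stepOp_nonneg (hE : IsProjChain E N) {a : ℕ → ℝ} (ha : ∀ j, 0 ≤ a j) :
    0 ≤ stepOp E N a := by
  rw [ContinuousLinearMap.nonneg_iff_isPositive, ContinuousLinearMap.isPositive_def']
  refine ⟨hE.stepOp_isSelfAdjoint a, fun x => ?_⟩
  change 0 ≤ (⟪stepOp E N a x, x⟫_ℂ).re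
  rw [hE.re_inner_stepOp]
  exact Finset.sum_nonneg fun j _ => mul_nonneg (ha j) (by positivity)

lemma nnrpow_stepOp_pow (hE : IsProjChain E N) {a : ℕ → ℝ} (ha : ∀ j, 0 ≤ a j) {m : ℕ}
    (hm : m ≠ 0) : (stepOp E N fun j => a j ^ m) ^ ((m : ℝ≥0)⁻¹) = stepOp E N a := by
  have h0 := hE.stepOp_nonneg ha
  have hm' : (m : ℝ≥0) ≠ 0 := by exact_mod_cast hm
  rw [← hE.stepOp_pow, ← CFC.rpow_natCast _ m h0]
  have : (stepOp E N a) ^ (m : ℝ) = (stepOp E N a) ^ (m : ℝ≥0) := by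
    rw [CFC.nnrpow_eq_rpow (by positivity)]; rfl
  rw [this, CFC.nnrpow_nnrpow_inv _ hm' h0]

end IsProjChain

/-! ### Roots and quadratic forms -/

lemma absPow_eq (A : H →L[ℂ] H) (n : ℕ) :
    absPow A n = (adj (A ^ n) * A ^ n) ^ (((2 * n : ℕ) : ℝ≥0)⁻¹) := by
  rw [absPow, CFC.nnrpow_eq_pow, opAbs, CFC.nnrpow_sqrt]
  congr 1
  push_cast
  rw [mul_inv, div_eq_mul_inv, mul_comm]

lemma re_inner_adjoint_mul (T : H →L[ℂ] H) (x : H) :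
    (⟪(adj T * T) x, x⟫_ℂ).re = ‖T x‖ ^ 2 := by
  rw [mul_apply_eq_comp, ContinuousLinearMap.adjoint_inner_left, inner_self_eq_norm_sq_to_K]
  norm_cast

lemma le_of_re_inner {S T : H →L[ℂ] H} (hS : IsSelfAdjoint S) (hT : IsSelfAdjoint T)
    (h : ∀ x, (⟪S x, x⟫_ℂ).re ≤ (⟪T x, x⟫_ℂ).re) : S ≤ T := by
  rw [ContinuousLinearMap.le_def, ContinuousLinearMap.isPositive_def']
  refine ⟨hT.sub hS, fun x => ?_⟩
  change 0 ≤ (⟪(T - S) x, x⟫_ℂ).re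
  rw [_root_.sub_apply, inner_sub_left, Complex.sub_re]
  linarith [h x]

/-- Quadratic form estimates for `A ^ n` by step operators pass to the `2n`-th root, because
`t ↦ t ^ (1 / 2n)` is operator monotone. -/
lemma absPow_sandwich {E : ℕ → H →L[ℂ] H} {N : ℕ} (hE : IsProjChain E N) {A : H →L[ℂ] H} {n : ℕ}
    (hn : n ≠ 0) {a b : ℕ → ℝ} (ha : ∀ j, 0 ≤ a j) (hb : ∀ j, 0 ≤ b j)
    (hla : ∀ x, ∑ j ∈ Finset.range N, a j ^ (2 * n) * ‖(E j - E (j + 1)) x‖ ^ 2 ≤ ‖(A ^ n) x‖ ^ 2)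
    (hlb : ∀ x, ‖(A ^ n) x‖ ^ 2 ≤ ∑ j ∈ Finset.range N, b j ^ (2 * n) * ‖(E j - E (j + 1)) x‖ ^ 2) :
    stepOp E N a ≤ absPow A n ∧ absPow A n ≤ stepOp E N b := by
  have hm : 2 * n ≠ 0 := by omega
  have hp : (((2 * n : ℕ) : ℝ≥0)⁻¹) ∈ Set.Icc (0 : ℝ≥0) 1 :=
    ⟨zero_le, inv_le_one_of_one_le₀ (by exact_mod_cast Nat.one_le_iff_ne_zero.2 hm)⟩
  have hsa : IsSelfAdjoint (adj (A ^ n) * A ^ n) := IsSelfAdjoint.star_mul_self (A ^ n)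
  rw [absPow_eq, ← hE.nnrpow_stepOp_pow ha hm, ← hE.nnrpow_stepOp_pow hb hm]
  constructor
  · refine CFC.nnrpow_le_nnrpow hp (le_of_re_inner (hE.stepOp_isSelfAdjoint _) hsa fun x => ?_)
    rw [hE.re_inner_stepOp, re_inner_adjoint_mul]
    exact hla x
  · refine CFC.nnrpow_le_nnrpow hp (le_of_re_inner hsa (hE.stepOp_isSelfAdjoint _) fun x => ?_)
    rw [hE.re_inner_stepOp, re_inner_adjoint_mul]
    exact hlb x

/-! ### Approximation and convergence -/

/-- The projections onto `domSub A (j * δ)` form a chain, and on its blocks `A ^ n` grows between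
the rates `j * δ` and `(j + 2) * δ`, up to a constant `K` independent of `n`. -/
lemma exists_chain {A : H →L[ℂ] H} (hA : IsCompactOperator A) {δ : ℝ} (hδ : 0 < δ) :
    ∃ (E : ℕ → H →L[ℂ] H) (N : ℕ) (K : ℝ), IsProjChain E N ∧ 1 ≤ K ∧
      (∀ j, j ≠ 0 → IsCompactOperator (E j)) ∧
      (∀ n x, n ≠ 0 → ∑ j ∈ Finset.range N, (j * δ) ^ (2 * n) * ‖(E j - E (j + 1)) x‖ ^ 2 ≤
        K * ‖(A ^ n) x‖ ^ 2) ∧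
      (∀ n x, ‖(A ^ n) x‖ ^ 2 ≤
        K * ∑ j ∈ Finset.range N, ((j + 2) * δ) ^ (2 * n) * ‖(E j - E (j + 1)) x‖ ^ 2) := by
  let V : ℕ → Submodule ℂ H := fun j => domSub A (j * δ)
  have hV : ∀ j, (V j).HasOrthogonalProjection := fun j =>
    hasOrthogonalProjection_domSub hA (by positivity)
  have hVanti : ∀ i j, i ≤ j → V j ≤ V i := fun i j hij =>
    domSub_antitone A (by positivity) (by gcongr)
  obtain ⟨N, hN⟩ := exists_nat_gt (‖A‖ / δ)
  let E : ℕ → H →L[ℂ] H := fun j => (V j).starProjection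
  have hE : IsProjChain E N :=
    { selfAdjoint := fun j => isSelfAdjoint_starProjection (V j)
      mul_eq := fun i j hij => by
        ext x
        exact Submodule.starProjection_eq_self_iff.2
          (hVanti i j hij (Submodule.starProjection_apply_mem _ x))
      mul_eq' := fun i j hij => Submodule.starProjection_comp_starProjection_of_le (hVanti i j hij)
      zero := by
        have : V 0 = ⊤ := by simp [V, domSub_zero]
        simp only [E, this, Submodule.starProjection_top']
      last := by
        have : V N = ⊥ := domSub_eq_bot ((div_lt_iff₀ hδ).1 hN)
        simp only [E, this, Submodule.starProjection_bot] }
  choose C hC0 hC using fun j : ℕ => domSub_lower hA (s := j * δ) (by positivity)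
  choose D hD0 hD using fun j : ℕ =>
    domSub_orthogonal_growth hA (s := (j + 1 : ℕ) * δ) (t := (j + 2) * δ) (by positivity)
      (by push_cast; gcongr; norm_num)
  have hker : ∀ j x, (E j - E (j + 1)) x ∈ (V (j + 1))ᗮ := by
    intro j x
    rw [← Submodule.starProjection_apply_eq_zero_iff]
    change (E (j + 1)) ((E j - E (j + 1)) x) = 0
    rw [← mul_apply_eq_comp, mul_sub, hE.mul_eq' j (j + 1) (by omega),
      hE.mul_eq (j + 1) (j + 1) le_rfl, sub_self]
    rfl
  refine ⟨E, N, 1 + ∑ j ∈ Finset.range N, C j ^ 2 + ∑ j ∈ Finset.range N, D j ^ 2, hE, ?_, ?_, ?_,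
    ?_⟩
  · have h1 : 0 ≤ ∑ j ∈ Finset.range N, C j ^ 2 := by positivity
    have h2 : 0 ≤ ∑ j ∈ Finset.range N, D j ^ 2 := by positivity
    linarith
  · intro j hj
    have : FiniteDimensional ℂ (V j) := finiteDimensional_domSub hA (by positivity)
    have : ProperSpace (V j) := FiniteDimensional.proper ℂ (V j)
    have h1 : IsCompactOperator (V j).orthogonalProjectionOnto :=
      isCompactOperator_of_locallyCompactSpace_dom _
    exact h1.clm_comp (V j).subtypeL
  · intro n x hn
    have h2 : 0 ≤ ∑ j ∈ Finset.range N, D j ^ 2 := by positivity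
    refine le_trans ?_ (mul_le_mul_of_nonneg_right
      (b := ∑ j ∈ Finset.range N, C j ^ 2) (by linarith) (by positivity))
    rw [Finset.sum_mul]
    refine Finset.sum_le_sum fun j _ => ?_
    have h3 : (j * δ) ^ n * ‖(E j - E (j + 1)) x‖ ≤ C j * ‖(A ^ n) x‖ :=
      le_trans (by gcongr; exact hE.norm_block_le' j x) (hC j n x hn)
    have h4 := pow_le_pow_left₀ (by positivity) h3 2
    rw [mul_pow (_ ^ n), mul_pow (C j), ← pow_mul, mul_comm n 2] at h4
    exact h4
  · intro n x
    have h2 : 0 ≤ ∑ j ∈ Finset.range N, C j ^ 2 := by positivity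
    refine le_trans ?_ (mul_le_mul_of_nonneg_right
      (b := ∑ j ∈ Finset.range N, D j ^ 2) (by linarith)
      (Finset.sum_nonneg fun j _ => by positivity))
    have h3 : (A ^ n) x = ∑ j ∈ Finset.range N, (A ^ n) ((E j - E (j + 1)) x) := by
      rw [← map_sum, ← _root_.sum_apply, hE.sum_block, one_apply_eq_self]
    have h4 : ‖(A ^ n) x‖ ≤
        ∑ j ∈ Finset.range N, D j * (((j + 2) * δ) ^ n * ‖(E j - E (j + 1)) x‖) := by
      rw [h3]
      refine (norm_sum_le _ _).trans (Finset.sum_le_sum fun j _ => ?_)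
      rw [← mul_assoc]
      exact hD j n _ (hker j x)
    refine (pow_le_pow_left₀ (norm_nonneg _) h4 2).trans
      ((Finset.sum_mul_sq_le_sq_mul_sq _ _ _).trans_eq ?_)
    congr 1
    refine Finset.sum_congr rfl fun j _ => ?_
    rw [mul_pow, ← pow_mul, mul_comm n 2]

lemma absPow_nonneg (A : H →L[ℂ] H) (n : ℕ) : 0 ≤ absPow A n := by
  rw [absPow_eq]
  exact CFC.nnrpow_nonneg

/-- The sequence stays eventually within `3 * δ` of a fixed compact operator. -/
lemma exists_approx {A : H →L[ℂ] H} (hA : IsCompactOperator A) {δ : ℝ} (hδ : 0 < δ) :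
    ∃ D : H →L[ℂ] H, IsCompactOperator D ∧ ∀ᶠ n in atTop, ‖absPow A n - D‖ < 3 * δ := by
  obtain ⟨E, N, K, hE, hK, hcpt, hlow, hup⟩ := exists_chain hA hδ
  refine ⟨stepOp E N fun j => j * δ, ?_, ?_⟩
  · have : ∀ s : Finset ℕ, IsCompactOperator
        (∑ j ∈ s, ((j : ℝ) * δ) • (E j - E (j + 1)) : H →L[ℂ] H) := by
      intro s
      refine Submodule.sum_mem (compactOperator (RingHom.id ℂ) H H) fun j _ => ?_
      rcases eq_or_ne j 0 with rfl | hj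
      · simp
      · exact ((hcpt j hj).sub (hcpt (j + 1) (by omega))).smul (_ : ℝ)
    exact this _
  · have hK0 : 0 < K := by linarith
    -- `k n` is the factor by which `K` distorts the weights after taking the `2n`-th root
    let k : ℕ → ℝ := fun n => K ^ ((((2 * n : ℕ) : ℝ))⁻¹)
    have hk0 : ∀ n, 0 < k n := fun n => Real.rpow_pos_of_pos hK0 _
    have hk : Tendsto k atTop (𝓝 1) := by
      have h1 : Tendsto (fun n : ℕ => (((2 * n : ℕ) : ℝ))⁻¹) atTop (𝓝 0) :=
        tendsto_inv_atTop_zero.comp (tendsto_natCast_atTop_atTop.comp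
          (tendsto_id.const_mul_atTop' (by norm_num)))
      have h2 := (tendsto_const_nhds (x := K)).rpow h1 (Or.inl hK0.ne')
      rw [Real.rpow_zero] at h2
      exact h2
    have hkn : ∀ n, n ≠ 0 → k n ^ (2 * n) = K := fun n hn =>
      Real.rpow_inv_natCast_pow hK0.le (by omega)
    let a : ℕ → ℕ → ℝ := fun n j => (k n)⁻¹ * (j * δ)
    let b : ℕ → ℕ → ℝ := fun n j => k n * ((j + 2) * δ)
    have hcont : ∀ (c : ℕ → ℕ → ℝ) (c' : ℕ → ℝ), (∀ j, Tendsto (fun n => c n j) atTop (𝓝 (c' j))) →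
        Tendsto (fun n => stepOp E N (c n)) atTop (𝓝 (stepOp E N c')) := fun c c' h =>
      tendsto_finsetSum _ fun j _ => (h j).smul_const _
    have hta := hcont a (fun j => j * δ) fun j => by
      simpa [a] using (hk.inv₀ one_ne_zero).mul_const ((j : ℝ) * δ)
    have htb := hcont b (fun j => (j + 2) * δ) fun j => by
      simpa [b] using hk.mul_const (((j : ℝ) + 2) * δ)
    have hdiff : stepOp E N (fun j => (j + 2) * δ) - stepOp E N (fun j => j * δ) =
        (2 * δ) • (1 : H →L[ℂ] H) := by
      rw [← hE.stepOp_const, stepOp, stepOp, stepOp, ← Finset.sum_sub_distrib]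
      refine Finset.sum_congr rfl fun j _ => ?_
      rw [← sub_smul]
      congr 1
      ring
    have hlim : Tendsto (fun n => ‖stepOp E N (b n) - stepOp E N (a n)‖ +
        ‖stepOp E N (a n) - stepOp E N fun j => j * δ‖) atTop
        (𝓝 (‖(2 * δ) • (1 : H →L[ℂ] H)‖ + 0)) := by
      refine Tendsto.add ?_ ?_
      · rw [← hdiff]
        exact (htb.sub hta).norm
      · simpa using (hta.sub_const (stepOp E N fun j => j * δ)).norm
    have hlt : ‖(2 * δ) • (1 : H →L[ℂ] H)‖ + 0 < 3 * δ := by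
      rw [norm_smul, Real.norm_of_nonneg (by positivity)]
      have : ‖(1 : H →L[ℂ] H)‖ ≤ 1 := ContinuousLinearMap.norm_id_le
      nlinarith
    filter_upwards [hlim.eventually_lt_const hlt, eventually_ne_atTop 0] with n hn hn0
    obtain ⟨h1, h2⟩ := absPow_sandwich hE (A := A) hn0 (a := a n) (b := b n)
      (fun j => by have := hk0 n; positivity) (fun j => by have := hk0 n; positivity)
      (fun x => by
        simp only [a, mul_pow (k n)⁻¹, inv_pow, hkn n hn0, mul_assoc K⁻¹]
        rw [← Finset.mul_sum, inv_mul_le_iff₀ hK0]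
        exact hlow n x hn0)
      (fun x => by
        simp only [b, mul_pow (k n), hkn n hn0, mul_assoc K]
        rw [← Finset.mul_sum]
        exact hup n x)
    have h3 : ‖absPow A n - stepOp E N (a n)‖ ≤ ‖stepOp E N (b n) - stepOp E N (a n)‖ :=
      CStarAlgebra.norm_le_norm_of_nonneg_of_le (sub_nonneg.2 h1) (sub_le_sub_right h2 _)
    refine lt_of_le_of_lt ?_ hn
    refine le_trans ?_ (add_le_add_left h3 _)
    exact norm_sub_le_norm_sub_add_norm_sub _ _ _

end

/-- For a compact operator `A` on a complex separable Hilbert space, the sequence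
`(|A^n|^{1/n})` converges in operator norm to a positive compact operator `B`. -/
theorem abspow_tendsto_positive_compact {H : Type*} [NormedAddCommGroup H]
    [InnerProductSpace ℂ H] [CompleteSpace H] [TopologicalSpace.SeparableSpace H]
    (A : H →L[ℂ] H) (hA : IsCompactOperator (⇑A)) :
    ∃ B : H →L[ℂ] H, B.IsPositive ∧ IsCompactOperator (⇑B) ∧
      Tendsto (fun n : ℕ => absPow A n) atTop (𝓝 B) := by
  have hcauchy : CauchySeq fun n : ℕ => absPow A n := by
    rw [Metric.cauchySeq_iff']
    intro ε hε
    obtain ⟨D, -, hD⟩ := exists_approx hA (δ := ε / 6) (by positivity)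
    obtain ⟨N, hN⟩ := eventually_atTop.1 hD
    refine ⟨N, fun n hn => ?_⟩
    have h1 := hN n hn
    have h2 := hN N le_rfl
    rw [← dist_eq_norm] at h1 h2
    have := dist_triangle_right (absPow A n) (absPow A N) D
    linarith
  obtain ⟨B, hB⟩ := cauchySeq_tendsto_of_complete hcauchy
  refine ⟨B, ?_, ?_, hB⟩
  · rw [← ContinuousLinearMap.nonneg_iff_isPositive]
    exact ge_of_tendsto' hB fun n => absPow_nonneg A n
  · have hmem : B ∈ closure {f : H →L[ℂ] H | IsCompactOperator f} := by
      rw [Metric.mem_closure_iff]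
      intro ε hε
      obtain ⟨D, hDc, hD⟩ := exists_approx hA (δ := ε / 6) (by positivity)
      refine ⟨D, hDc, ?_⟩
      have h1 : ‖B - D‖ ≤ 3 * (ε / 6) :=
        le_of_tendsto (hB.sub_const D).norm (hD.mono fun n hn => hn.le)
      rw [dist_eq_norm]
      linarith
    have hcl : IsClosed {f : H →L[ℂ] H | IsCompactOperator f} :=
      isClosed_setOfPred_isCompactOperator
    rw [hcl.closure_eq] at hmem
    exact hmem
end

section
/- Let H be a complex Hilbert space, T a bounded linear operator on H, and r ≥ 0 a real number. Then the set V(T,r) = {x ∈ H : limsup_{n→∞} ⟨|T^n|x, x⟩^{1/n} ≤ r} is a linear subspace of H. -/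
/-!
Write `a n x = ⟨|T ^ n| x, x⟩`. Since `‖|T ^ n|‖ = ‖T ^ n‖ ≤ ‖T‖ ^ n`, the roots `(a n x) ^ (1 / n)`
are bounded, and `limsup (a n x) ^ (1 / n) ≤ r` says exactly that for each `ρ > r` one has
`a n x < ρ ^ n` for all large `n` (`limsup_root_le_iff`). Positivity of `|T ^ n|` gives
`a n (x + y) ≤ 2 * a n x + 2 * a n y` (`opAbs_form_add_le`), and `a n (c • x) = ‖c‖ ^ 2 * a n x`.
So sums and scalar multiples satisfy the same exponential bounds up to a constant factor, which is
absorbed by increasing the rate slightly (`eventually_lt_pow_of_const_mul`).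
-/

open scoped NNReal InnerProductSpace
open Filter Topology

/-- Absorbing a constant: exponential bounds at all rates `σ > r` with a common constant `K`
give exponential bounds at all rates `ρ > r` with constant `1`. -/
lemma eventually_lt_pow_of_const_mul {a : ℕ → ℝ} {r K : ℝ} (hr : 0 ≤ r)
    (h : ∀ σ > r, ∀ᶠ n : ℕ in atTop, a n ≤ K * σ ^ n) :
    ∀ ρ > r, ∀ᶠ n : ℕ in atTop, a n < ρ ^ n := by
  intro ρ hρ
  have hρ0 : 0 < ρ := lt_of_le_of_lt hr hρ
  have hσ : r < (r + ρ) / 2 := by linarith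
  have hlim : Tendsto (fun n : ℕ => K * (((r + ρ) / 2) / ρ) ^ n) atTop (𝓝 (K * 0)) :=
    (tendsto_pow_atTop_nhds_zero_of_lt_one (by positivity)
      (by rw [div_lt_one hρ0]; linarith)).const_mul K
  rw [mul_zero] at hlim
  filter_upwards [h _ hσ, hlim.eventually_lt_const one_pos] with n hn hn1
  have hp : 0 < ρ ^ n := by positivity
  rw [div_pow, ← mul_div_assoc, div_lt_one hp] at hn1
  exact hn.trans_lt hn1

/-- Root-test form of the limsup condition. The bound `a n ≤ C * M ^ n` makes the sequence of
`n`-th roots bounded, so that its real-valued `limsup` is not a junk value. -/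
lemma limsup_root_le_iff {a : ℕ → ℝ} {r C M : ℝ} (hr : 0 ≤ r) (ha : ∀ n, 0 ≤ a n)
    (hM : 0 ≤ M) (hC : 1 ≤ C) (hb : ∀ n, a n ≤ C * M ^ n) :
    atTop.limsup (fun n : ℕ => a n ^ (1 / n : ℝ)) ≤ r ↔
      ∀ ρ > r, ∀ᶠ n : ℕ in atTop, a n < ρ ^ n := by
  have hbdd : IsBoundedUnder (· ≤ ·) atTop (fun n : ℕ => a n ^ (1 / n : ℝ)) := by
    refine isBoundedUnder_of_eventually_le (a := C * M) ?_
    filter_upwards [eventually_gt_atTop 0] with n hn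
    rw [one_div, Real.rpow_inv_le_iff_of_pos (ha n) (by positivity) (by exact_mod_cast hn),
      Real.rpow_natCast, mul_pow]
    refine (hb n).trans ?_
    gcongr
    exact le_self_pow₀ hC hn.ne'
  have hcob : IsCoboundedUnder (· ≤ ·) atTop (fun n : ℕ => a n ^ (1 / n : ℝ)) :=
    isCoboundedUnder_le_of_le atTop (x := 0) fun n => Real.rpow_nonneg (ha n) _
  rw [limsup_le_iff hcob hbdd]
  refine forall₂_congr fun ρ hρ => eventually_congr ?_
  filter_upwards [eventually_gt_atTop 0] with n hn
  rw [one_div, Real.rpow_inv_lt_iff_of_pos (ha n) (hr.trans hρ.le) (by exact_mod_cast hn),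
    Real.rpow_natCast]

section opAbs

variable {H : Type*} [NormedAddCommGroup H] [InnerProductSpace ℂ H] [CompleteSpace H]

lemma opAbs_nonneg (S : H →L[ℂ] H) : 0 ≤ opAbs S := CFC.sqrt_nonneg _

lemma opAbs_norm (S : H →L[ℂ] H) : ‖opAbs S‖ = ‖S‖ := by
  have h1 : opAbs S * opAbs S = star S * S :=
    CFC.sqrt_mul_sqrt_self _ (star_mul_self_nonneg S)
  have hsa : star (opAbs S) = opAbs S := (IsSelfAdjoint.of_nonneg (opAbs_nonneg S)).star_eq
  have h2 : ‖opAbs S‖ * ‖opAbs S‖ = ‖S‖ * ‖S‖ := by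
    rw [← CStarRing.norm_star_mul_self, hsa, h1, CStarRing.norm_star_mul_self]
  exact (mul_self_inj (norm_nonneg _) (norm_nonneg _)).1 h2

lemma opAbs_form_nonneg (S : H →L[ℂ] H) (x : H) : 0 ≤ (⟪opAbs S x, x⟫_ℂ).re :=
  ((ContinuousLinearMap.nonneg_iff_isPositive _).1 (opAbs_nonneg S)).re_inner_nonneg_left x

/-- Quasi-subadditivity of the quadratic form of `|S|`: by the parallelogram identity the
right-hand side exceeds the left-hand side by the value of the form at `x - y`. -/
lemma opAbs_form_add_le (S : H →L[ℂ] H) (x y : H) :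
    (⟪opAbs S (x + y), x + y⟫_ℂ).re ≤
      2 * (⟪opAbs S x, x⟫_ℂ).re + 2 * (⟪opAbs S y, y⟫_ℂ).re := by
  have h := opAbs_form_nonneg S (x - y)
  simp only [map_add, map_sub, inner_add_left, inner_add_right, inner_sub_left, inner_sub_right,
    Complex.add_re, Complex.sub_re] at h ⊢
  linarith

lemma opAbs_form_smul (S : H →L[ℂ] H) (c : ℂ) (x : H) :
    (⟪opAbs S (c • x), c • x⟫_ℂ).re = ‖c‖ ^ 2 * (⟪opAbs S x, x⟫_ℂ).re := by
  rw [map_smul, inner_smul_left, inner_smul_right, ← mul_assoc, Complex.conj_mul',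
    ← Complex.ofReal_pow, Complex.re_ofReal_mul]

lemma opAbs_pow_form_le (T : H →L[ℂ] H) (x : H) (n : ℕ) :
    (⟪opAbs (T ^ n) x, x⟫_ℂ).re ≤ (‖x‖ ^ 2 + 1) * ‖T‖ ^ n := by
  have hn : ‖T ^ n‖ ≤ ‖T‖ ^ n := by
    rcases n.eq_zero_or_pos with rfl | hn
    -- The trivial space has `‖1‖ = 0`, so the exponent `0` needs its own bound.
    · rw [pow_zero, pow_zero]
      exact ContinuousLinearMap.norm_id_le (𝕜 := ℂ) (E := H)
    · exact norm_pow_le' T hn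
  calc (⟪opAbs (T ^ n) x, x⟫_ℂ).re ≤ ‖opAbs (T ^ n) x‖ * ‖x‖ := re_inner_le_norm (𝕜 := ℂ) _ _
    _ ≤ ‖T‖ ^ n * ‖x‖ * ‖x‖ := by
        gcongr
        refine ((opAbs (T ^ n)).le_opNorm x).trans ?_
        rw [opAbs_norm]
        gcongr
    _ ≤ (‖x‖ ^ 2 + 1) * ‖T‖ ^ n := by
        have : 0 ≤ ‖T‖ ^ n := by positivity
        nlinarith

lemma limsup_opAbs_form_le_iff (T : H →L[ℂ] H) {r : ℝ} (hr : 0 ≤ r) (x : H) :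
    atTop.limsup (fun n : ℕ => (⟪opAbs (T ^ n) x, x⟫_ℂ).re ^ (1 / n : ℝ)) ≤ r ↔
      ∀ ρ > r, ∀ᶠ n : ℕ in atTop, (⟪opAbs (T ^ n) x, x⟫_ℂ).re < ρ ^ n :=
  limsup_root_le_iff hr (fun n => opAbs_form_nonneg (T ^ n) x) (norm_nonneg T)
    (by nlinarith [sq_nonneg ‖x‖]) (opAbs_pow_form_le T x)

end opAbs

/-- For any bounded operator `T` and `r ≥ 0`, the set
`V(T,r) = {x : limsup ⟨|T^n|x,x⟩^{1/n} ≤ r}` is a linear subspace of `H`. -/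
theorem V_is_subspace {H : Type*} [NormedAddCommGroup H]
    [InnerProductSpace ℂ H] [CompleteSpace H]
    (T : H →L[ℂ] H) (r : ℝ) (hr : 0 ≤ r) :
    ∃ S : Submodule ℂ H, (S : Set H) =
      {x : H | atTop.limsup (fun n : ℕ => (⟪opAbs (T ^ n) x, x⟫_ℂ).re ^ (1 / n : ℝ)) ≤ r} := by
  refine ⟨{ carrier := {x : H | ∀ ρ > r, ∀ᶠ n : ℕ in atTop, (⟪opAbs (T ^ n) x, x⟫_ℂ).re < ρ ^ n}
            zero_mem' := ?_
            add_mem' := ?_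
            smul_mem' := ?_ }, ?_⟩
  · intro x y hx hy
    refine eventually_lt_pow_of_const_mul (K := 4) hr fun σ hσ => ?_
    filter_upwards [hx σ hσ, hy σ hσ] with n h1 h2
    linarith [opAbs_form_add_le (T ^ n) x y]
  · intro ρ hρ
    have : 0 < ρ := hr.trans_lt hρ
    refine Eventually.of_forall fun n => ?_
    simpa using pow_pos this n
  · intro c x hx
    refine eventually_lt_pow_of_const_mul (K := ‖c‖ ^ 2) hr fun σ hσ => ?_
    filter_upwards [hx σ hσ] with n h1
    rw [opAbs_form_smul]
    gcongr
  · ext x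
    exact (limsup_opAbs_form_le_iff T hr x).symm
end

section
/- Let H be a complex Hilbert space and let T₁ and T₂ be positive bounded linear operators on H. If V(T₁,r) = V(T₂,r) for every real r ≥ 0, then T₁ = T₂. -/
/-!
For a positive operator `T` the set `V(T, r)` is the kernel of `(T - r)₊`, i.e. the range of the
spectral projection of `[0, r]`, so the statement says that `T` is determined by its spectral
projections. The proof uses only the continuous functional calculus.

* `limsup_le_iff_excess` identifies `V(T, r)` with the kernel of `(T - r)₊`. If `(T - r)₊ x = 0`,
  then `t ^ n ≤ r ^ n + K (t - r)₊` on the spectrum gives `⟪T ^ n x, x⟫ ≤ r ^ n ‖x‖ ^ 2`.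
  Conversely `(t - r)₊ ^ 2 ≤ ε ^ 2 + C (t / (r + ε)) ^ n` bounds `‖(T - r)₊ x‖` by `ε ‖x‖`.
* Cut `T` into layers `min ((T - k δ)₊) δ` of height `δ`, which add up to `T`. The layer of `T₁`
  at level `(k + 1) δ` is supported on the orthogonal complement of `V(T₁, (k + 1) δ)`, where the
  layer of `T₂` at level `k δ` equals `δ`; hence the former is at most the latter (`layer_le`).
  Summing over `k` gives `T₁ ≤ T₂ + δ`, and `δ → 0` gives `T₁ ≤ T₂`. The roles of `T₁` and `T₂`
  are symmetric.
-/

open scoped NNReal InnerProductSpace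
open Filter Topology

/-! ### Positive operators and quadratic forms -/

section Spectral

set_option linter.unusedSectionVars false

variable {H : Type*} [NormedAddCommGroup H] [InnerProductSpace ℂ H] [CompleteSpace H]

theorem opAbs_pow {T : H →L[ℂ] H} (hT : 0 ≤ T) (n : ℕ) : opAbs (T ^ n) = T ^ n := by
  have h : 0 ≤ T ^ n := by
    rw [← cfc_pow_id (R := ℝ) T n]
    exact cfc_nonneg fun t ht => pow_nonneg (spectrum_nonneg_of_nonneg hT ht) n
  exact CFC.abs_of_nonneg (T ^ n) h

theorem exists_spectrum_bound {T : H →L[ℂ] H} (hT : 0 ≤ T) :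
    ∃ R : ℝ, 1 ≤ R ∧ ∀ t ∈ spectrum ℝ T, 0 ≤ t ∧ t ≤ R := by
  refine ⟨max 1 (‖T‖ * ‖(1 : H →L[ℂ] H)‖), le_max_left _ _, fun t ht => ⟨?_, ?_⟩⟩
  · exact spectrum_nonneg_of_nonneg hT ht
  · exact (le_abs_self t).trans ((spectrum.norm_le_norm_mul_of_mem ht).trans (le_max_right _ _))

theorem re_inner_mono {A B : H →L[ℂ] H} (h : A ≤ B) (x : H) :
    (⟪A x, x⟫_ℂ).re ≤ (⟪B x, x⟫_ℂ).re := by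
  have h1 := ((ContinuousLinearMap.le_def A B).1 h).re_inner_nonneg_left x
  simp only [sub_apply, inner_sub_left, map_sub] at h1
  exact sub_nonneg.1 h1

theorem re_inner_nonneg {A : H →L[ℂ] H} (h : 0 ≤ A) (x : H) : 0 ≤ (⟪A x, x⟫_ℂ).re := by
  simpa using re_inner_mono h x

theorem re_inner_algebraMap (c : ℝ) (x : H) :
    (⟪algebraMap ℝ (H →L[ℂ] H) c x, x⟫_ℂ).re = c * ‖x‖ ^ 2 := by
  rw [Algebra.algebraMap_eq_smul_one]
  simp only [smul_apply, one_apply_eq_self]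
  rw [← algebraMap_smul ℂ c x, inner_smul_left, inner_self_eq_norm_sq_to_K]
  simp [← Complex.ofReal_pow]

/-! ### The sets `V(T, r)` as kernels of `(T - r)₊` -/

/-- The excess `(T - r)₊` of `T` over the level `r`. -/
noncomputable def excess (T : H →L[ℂ] H) (r : ℝ) : H →L[ℂ] H :=
  cfc (fun t : ℝ => max (t - r) 0) T

/-- On `[0, R]` the convex function `t ^ n` exceeds `r ^ n` by at most a multiple of `(t - r)₊`. -/
theorem exists_pow_le {r R : ℝ} (hr : 0 ≤ r) (hR : 0 ≤ R) (n : ℕ) :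
    ∃ K : ℝ, 0 ≤ K ∧ ∀ t : ℝ, 0 ≤ t → t ≤ R → t ^ n ≤ r ^ n + K * max (t - r) 0 := by
  induction n with
  | zero => exact ⟨0, le_rfl, by simp⟩
  | succ n ih =>
    obtain ⟨K, hK, h⟩ := ih
    refine ⟨r ^ n + R * K, by positivity, fun t ht htR => ?_⟩
    have hm : 0 ≤ max (t - r) 0 := le_max_right _ _
    have h1 : t - r ≤ max (t - r) 0 := le_max_left _ _
    have h2 := mul_le_mul_of_nonneg_left (h t ht htR) ht
    have h3 := mul_le_mul_of_nonneg_right htR (mul_nonneg hK hm)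
    have h4 := mul_le_mul_of_nonneg_left h1 (pow_nonneg hr n)
    rw [pow_succ, pow_succ]
    nlinarith

theorem re_inner_pow_nonneg {T : H →L[ℂ] H} (hT : 0 ≤ T) (n : ℕ) (x : H) :
    0 ≤ (⟪(T ^ n) x, x⟫_ℂ).re := by
  rw [← cfc_pow_id (R := ℝ) T n]
  exact re_inner_nonneg (cfc_nonneg fun t ht => pow_nonneg (spectrum_nonneg_of_nonneg hT ht) n) x

theorem re_inner_pow_le_of_excess {T : H →L[ℂ] H} (hT : 0 ≤ T) {r : ℝ} (hr : 0 ≤ r) {x : H}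
    (hx : excess T r x = 0) (n : ℕ) : (⟪(T ^ n) x, x⟫_ℂ).re ≤ r ^ n * ‖x‖ ^ 2 := by
  obtain ⟨R, hR, hs⟩ := exists_spectrum_bound hT
  obtain ⟨K, -, hK⟩ := exists_pow_le hr (zero_le_one.trans hR) n
  have h : T ^ n ≤ algebraMap ℝ (H →L[ℂ] H) (r ^ n) + K • excess T r := by
    rw [excess, ← cfc_const_mul K _ T, ← cfc_const (r ^ n) T, ← cfc_add T _ _,
      ← cfc_pow_id (R := ℝ) T n]
    exact cfc_mono fun t ht => hK t (hs t ht).1 (hs t ht).2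
  refine (re_inner_mono h x).trans (le_of_eq ?_)
  rw [add_apply, inner_add_left, Complex.add_re, re_inner_algebraMap]
  simp [hx]

theorem re_inner_pow_le {T : H →L[ℂ] H} (hT : 0 ≤ T) : ∃ R : ℝ, 1 ≤ R ∧
    ∀ (n : ℕ) (x : H), (⟪(T ^ n) x, x⟫_ℂ).re ≤ R ^ n * ‖x‖ ^ 2 := by
  obtain ⟨R, hR, hs⟩ := exists_spectrum_bound hT
  refine ⟨R, hR, fun n x => ?_⟩
  rw [← re_inner_algebraMap, ← cfc_const (R ^ n) T, ← cfc_pow_id (R := ℝ) T n]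
  exact re_inner_mono (cfc_mono fun t ht => pow_le_pow_left₀ (hs t ht).1 (hs t ht).2 n) x

theorem tendsto_mul_rpow (r c : ℝ) (hc : 0 < c) :
    Tendsto (fun n : ℕ => r * c ^ (1 / n : ℝ)) atTop (𝓝 r) := by
  have h : Tendsto (fun n : ℕ => (1 / n : ℝ)) atTop (𝓝 0) := tendsto_one_div_atTop_nhds_zero_nat
  simpa using ((tendsto_const_nhds (x := c)).rpow h (Or.inl hc.ne')).const_mul r

theorem rpow_inv_le {a r c : ℝ} (ha : 0 ≤ a) (hr : 0 ≤ r) (hc : 0 ≤ c) {n : ℕ} (hn : n ≠ 0)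
    (h : a ≤ r ^ n * c) : a ^ (1 / n : ℝ) ≤ r * c ^ (1 / n : ℝ) := by
  refine (Real.rpow_le_rpow ha h (by positivity)).trans (le_of_eq ?_)
  rw [Real.mul_rpow (by positivity) hc, one_div, Real.pow_rpow_inv_natCast hr hn]

theorem limsup_le_of_pow_le {a : ℕ → ℝ} {r c : ℝ} (ha : ∀ n, 0 ≤ a n) (hr : 0 ≤ r) (hc : 0 < c)
    (h : ∀ n, a n ≤ r ^ n * c) : atTop.limsup (fun n : ℕ => a n ^ (1 / n : ℝ)) ≤ r := by
  have ht := tendsto_mul_rpow r c hc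
  rw [← ht.limsup_eq]
  refine limsup_le_limsup ?_ ?_ ht.isBoundedUnder_le
  · filter_upwards [eventually_ne_atTop 0] with n hn
    exact rpow_inv_le (ha n) hr hc.le hn (h n)
  · exact IsBoundedUnder.isCoboundedUnder_le
      ⟨0, eventually_map.2 (Eventually.of_forall fun n => Real.rpow_nonneg (ha n) _)⟩

theorem eventually_le_pow_of_limsup {a : ℕ → ℝ} {r s R c : ℝ} (ha : ∀ n, 0 ≤ a n) (hR : 0 ≤ R)
    (hc : 0 < c) (h : ∀ n, a n ≤ R ^ n * c) (hrs : r < s)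
    (hl : atTop.limsup (fun n : ℕ => a n ^ (1 / n : ℝ)) ≤ r) : ∀ᶠ n in atTop, a n ≤ s ^ n := by
  have hb : IsBoundedUnder (· ≤ ·) atTop (fun n : ℕ => a n ^ (1 / n : ℝ)) := by
    refine (tendsto_mul_rpow R c hc).isBoundedUnder_le.mono_le ?_
    filter_upwards [eventually_ne_atTop 0] with n hn
    exact rpow_inv_le (ha n) hR hc.le hn (h n)
  filter_upwards [Filter.eventually_lt_of_limsup_lt (hl.trans_lt hrs) hb, eventually_ne_atTop 0]
    with n hn hn0
  have h1 := pow_le_pow_left₀ (Real.rpow_nonneg (ha n) _) hn.le n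
  rwa [one_div, Real.rpow_inv_natCast_pow (ha n) hn0] at h1

theorem norm_excess_sq (T : H →L[ℂ] H) (r : ℝ) (x : H) :
    ‖excess T r x‖ ^ 2 = (⟪(excess T r * excess T r) x, x⟫_ℂ).re := by
  have hsa : IsSelfAdjoint (excess T r) := cfc_predicate _ T
  rw [mul_apply_eq_comp, ← hsa.adjoint_eq, ContinuousLinearMap.adjoint_inner_left,
    hsa.adjoint_eq]
  simp [inner_self_eq_norm_sq_to_K, ← Complex.ofReal_pow]

/-- If the moments of `x` grow no faster than `s ^ n` and `0 ≤ s < q`, then `(T - r)₊ x` has norm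
at most `(q - r) ‖x‖` for `r ≤ q`: the part of `x` above the level `q` is killed by comparison with
`(t / q) ^ n`. -/
theorem norm_excess_sq_le {T : H →L[ℂ] H} (hT : 0 ≤ T) {r s q : ℝ} (hr : 0 ≤ r) (hs : 0 ≤ s)
    (hsq : s < q) (hrq : r ≤ q) {x : H}
    (h : ∀ᶠ n in atTop, (⟪(T ^ n) x, x⟫_ℂ).re ≤ s ^ n) :
    ‖excess T r x‖ ^ 2 ≤ (q - r) ^ 2 * ‖x‖ ^ 2 := by
  obtain ⟨R, hR, hsp⟩ := exists_spectrum_bound hT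
  have hq : 0 < q := hs.trans_lt hsq
  have key (n : ℕ) : ‖excess T r x‖ ^ 2 ≤
      (q - r) ^ 2 * ‖x‖ ^ 2 + R ^ 2 / q ^ n * (⟪(T ^ n) x, x⟫_ℂ).re := by
    have hle : excess T r * excess T r ≤
        algebraMap ℝ (H →L[ℂ] H) ((q - r) ^ 2) + (R ^ 2 / q ^ n) • T ^ n := by
      rw [excess, ← cfc_mul _ _ T, ← cfc_pow_id (R := ℝ) T n, ← cfc_const_mul _ _ T,
        ← cfc_const ((q - r) ^ 2) T, ← cfc_add T _ _]
      refine cfc_mono fun t ht => ?_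
      obtain ⟨h0, hRt⟩ := hsp t ht
      have hm : 0 ≤ max (t - r) 0 := le_max_right _ _
      rcases le_or_gt t q with htq | htq
      · have h1 : max (t - r) 0 ≤ q - r := max_le (by linarith) (by linarith)
        have h2 : 0 ≤ R ^ 2 / q ^ n * t ^ n := by positivity
        nlinarith
      · have h1 : max (t - r) 0 ≤ R := max_le (by linarith) (by linarith)
        have h2 : R ^ 2 ≤ R ^ 2 / q ^ n * t ^ n := by
          rw [div_mul_eq_mul_div, le_div_iff₀ (by positivity)]
          exact mul_le_mul_of_nonneg_left (pow_le_pow_left₀ hq.le htq.le n) (by positivity)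
        nlinarith [sq_nonneg (q - r)]
    rw [norm_excess_sq]
    refine (re_inner_mono hle x).trans (le_of_eq ?_)
    rw [add_apply, inner_add_left, Complex.add_re, re_inner_algebraMap,
      smul_apply, ← algebraMap_smul ℂ (R ^ 2 / q ^ n) ((T ^ n) x),
      inner_smul_left]
    simp only [Complex.coe_algebraMap, Complex.conj_ofReal, Complex.re_ofReal_mul]
  have hlim : Tendsto (fun n : ℕ => (q - r) ^ 2 * ‖x‖ ^ 2 + R ^ 2 * (s / q) ^ n) atTop
      (𝓝 ((q - r) ^ 2 * ‖x‖ ^ 2 + R ^ 2 * 0)) :=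
    ((tendsto_pow_atTop_nhds_zero_of_lt_one (by positivity)
      ((div_lt_one hq).2 hsq)).const_mul _).const_add _
  rw [mul_zero, add_zero] at hlim
  refine ge_of_tendsto hlim ?_
  filter_upwards [h] with n hn
  refine (key n).trans (add_le_add le_rfl ?_)
  calc R ^ 2 / q ^ n * (⟪(T ^ n) x, x⟫_ℂ).re ≤ R ^ 2 / q ^ n * s ^ n :=
        mul_le_mul_of_nonneg_left hn (by positivity)
    _ = R ^ 2 * (s / q) ^ n := by rw [div_pow]; ring

/-- The set `V(T, r)` is the kernel of `(T - r)₊`. -/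
theorem limsup_le_iff_excess {T : H →L[ℂ] H} (hT : 0 ≤ T) {r : ℝ} (hr : 0 ≤ r) (x : H) :
    atTop.limsup (fun n : ℕ => (⟪opAbs (T ^ n) x, x⟫_ℂ).re ^ (1 / n : ℝ)) ≤ r ↔
      excess T r x = 0 := by
  simp only [opAbs_pow hT]
  have ha (n : ℕ) := re_inner_pow_nonneg hT n x
  -- `‖x‖ ^ 2 + 1` replaces `‖x‖ ^ 2` to have a positive constant also for `x = 0`.
  have hc : 0 < ‖x‖ ^ 2 + 1 := by positivity
  constructor
  · intro hl
    obtain ⟨R, hR, hb⟩ := re_inner_pow_le hT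
    have hR0 : 0 ≤ R := zero_le_one.trans hR
    have hε (ε : ℝ) (hε : 0 < ε) : ‖excess T r x‖ ≤ ε * ‖x‖ := by
      have h := eventually_le_pow_of_limsup ha hR0 hc
        (fun n => (hb n x).trans (mul_le_mul_of_nonneg_left (by linarith) (by positivity)))
        (show r < r + ε / 2 by linarith) hl
      have h2 := norm_excess_sq_le hT hr (by linarith) (show r + ε / 2 < r + ε by linarith)
        (by linarith) h
      rw [add_sub_cancel_left, ← mul_pow] at h2
      exact le_of_sq_le_sq h2 (by positivity)
    have hlim : Tendsto (fun ε : ℝ => ε * ‖x‖) (𝓝[>] 0) (𝓝 0) := by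
      have : Tendsto (fun ε : ℝ => ε * ‖x‖) (𝓝 0) (𝓝 (0 * ‖x‖)) :=
        (continuous_id.mul continuous_const).tendsto 0
      rw [zero_mul] at this
      exact this.mono_left nhdsWithin_le_nhds
    have := ge_of_tendsto hlim (eventually_mem_nhdsWithin.mono fun ε h => hε ε h)
    exact norm_le_zero_iff.1 this
  · intro hx
    exact limsup_le_of_pow_le ha hr hc fun n => (re_inner_pow_le_of_excess hT hr hx n).trans
      (mul_le_mul_of_nonneg_left (by linarith) (by positivity))

/-! ### Comparison of layers -/

/-- The layer `min ((t - r)₊) δ` of `T` between the levels `r` and `r + δ`. -/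
noncomputable def layer (T : H →L[ℂ] H) (δ r : ℝ) : H →L[ℂ] H :=
  cfc (fun t : ℝ => min (max (t - r) 0) δ) T

/-- If `0 ≤ A ≤ δ`, `0 ≤ B`, and `B = δ` on the range of `A`, then `A ≤ B`: the operators commute
and `δ ^ 2 (B - A) = (δ - A) B (δ - A) + δ A (δ - A)`. The bounds on `A` enter as
`0 ≤ A (δ - A)`. -/
theorem le_of_mul_eq_smul {A B : H →L[ℂ] H} {δ : ℝ} (hδ : 0 < δ) (hA : IsSelfAdjoint A)
    (hB : 0 ≤ B) (hA2 : 0 ≤ δ • A - A * A) (h : A * B = δ • A) : A ≤ B := by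
  have h' : B * A = δ • A := by
    have := congrArg star h
    rwa [star_mul, star_smul, hA.star_eq, (IsSelfAdjoint.of_nonneg hB).star_eq,
      star_trivial] at this
  have hsa : IsSelfAdjoint (δ • (1 : H →L[ℂ] H) - A) :=
    ((IsSelfAdjoint.all δ).smul (IsSelfAdjoint.one (H →L[ℂ] H))).sub hA
  have h1 := hsa.conjugate_nonneg hB
  have h2 : 0 ≤ δ ^ 2 • (B - A) := by
    have e : δ ^ 2 • (B - A) = (δ • (1 : H →L[ℂ] H) - A) * B * (δ • (1 : H →L[ℂ] H) - A) +
        δ • (δ • A - A * A) := by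
      simp only [sub_mul, mul_sub, smul_mul_assoc, mul_smul_comm, one_mul, mul_one, h, h',
        smul_sub, smul_smul]
      module
    rw [e]
    exact add_nonneg h1 (smul_nonneg hδ.le hA2)
  have h3 := smul_nonneg (inv_nonneg.2 (sq_nonneg δ)) h2
  rw [smul_smul, inv_mul_cancel₀ (by positivity), one_smul] at h3
  exact sub_nonneg.1 h3

/-- A layer of `T₁` is dominated by the layer of `T₂` just below it, if the kernel of
`(T₂ - (r + δ))₊` is contained in that of `(T₁ - (r + δ))₊`. -/
theorem layer_le {T₁ T₂ : H →L[ℂ] H} (h₂ : 0 ≤ T₂) {δ r : ℝ} (hδ : 0 < δ)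
    (hker : ∀ x, excess T₂ (r + δ) x = 0 → excess T₁ (r + δ) x = 0) :
    layer T₁ δ (r + δ) ≤ layer T₂ δ r := by
  have hf (q t : ℝ) : 0 ≤ min (max (t - q) 0) δ := le_min (le_max_right _ _) hδ.le
  refine le_of_mul_eq_smul hδ (cfc_predicate _ T₁) (cfc_nonneg fun t _ => hf _ t) ?_ ?_
  · rw [layer, ← cfc_const_mul δ _ T₁, ← cfc_mul _ _ T₁, ← cfc_sub _ _ T₁]
    refine cfc_nonneg fun t _ => ?_
    have h := mul_le_mul_of_nonneg_right (min_le_right (max (t - (r + δ)) 0) δ) (hf (r + δ) t)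
    linarith
  -- `C = δ - layer T₂ δ r` vanishes above the level `r + δ`, so its range lies in the kernel of
  -- `excess T₂ (r + δ)`, hence in that of `excess T₁ (r + δ)`, which divides the layer of `T₁`.
  · have hC : excess T₂ (r + δ) * (algebraMap ℝ (H →L[ℂ] H) δ - layer T₂ δ r) = 0 := by
      rw [excess, layer, ← cfc_const δ T₂, ← cfc_sub _ _ T₂, ← cfc_mul _ _ T₂,
        ← cfc_zero ℝ T₂]
      refine cfc_congr fun t _ => ?_
      simp only [Pi.zero_apply]
      rcases le_or_gt t (r + δ) with h | h
      · rw [max_eq_right (by linarith), zero_mul]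
      · rw [min_eq_right (le_max_of_le_left (by linarith)), sub_self, mul_zero]
    have hC1 : excess T₁ (r + δ) * (algebraMap ℝ (H →L[ℂ] H) δ - layer T₂ δ r) = 0 := by
      ext x
      exact hker _ (by simpa using congrArg (fun S : H →L[ℂ] H => S x) hC)
    have hdiv : Continuous fun t : ℝ => δ / max δ (t - (r + δ)) :=
      continuous_const.div (by fun_prop) fun t => (lt_max_of_lt_left hδ).ne'
    have hA : layer T₁ δ (r + δ) =
        cfc (fun t : ℝ => δ / max δ (t - (r + δ))) T₁ * excess T₁ (r + δ) := by
      rw [layer, excess, ← cfc_mul _ _ T₁ hdiv.continuousOn]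
      refine cfc_congr fun t _ => ?_
      generalize t - (r + δ) = u
      rcases le_total u δ with h | h
      · rw [max_eq_left h, div_self hδ.ne', one_mul, min_eq_left (max_le h hδ.le)]
      · rw [max_eq_right h, max_eq_left (hδ.le.trans h), min_eq_right h,
          div_mul_cancel₀ _ (hδ.trans_le h).ne']
    have h0 : layer T₁ δ (r + δ) * (algebraMap ℝ (H →L[ℂ] H) δ - layer T₂ δ r) = 0 := by
      rw [hA, mul_assoc, hC1, mul_zero]
    rw [mul_sub, Algebra.algebraMap_eq_smul_one, mul_smul_comm, mul_one, sub_eq_zero] at h0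
    exact h0.symm

theorem min_succ_eq (T : H →L[ℂ] H) {δ : ℝ} (hδ : 0 < δ) (k : ℕ) :
    cfc (fun t : ℝ => min t ((k + 1 : ℕ) * δ)) T =
      cfc (fun t : ℝ => min t (k * δ)) T + layer T δ (k * δ) := by
  rw [layer, ← cfc_add T _ _]
  refine cfc_congr fun t _ => ?_
  push_cast
  simp only [add_mul, one_mul]
  generalize (k : ℝ) * δ = q
  rcases le_total t q with h | h
  · rw [min_eq_left (by linarith), min_eq_left h, max_eq_right (by linarith),
      min_eq_left hδ.le, add_zero]
  · rw [min_eq_right h, max_eq_left (by linarith), ← min_add_add_left]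
    ring_nf

/-- Summing the comparison of layers: `min(T₁, (k + 1) δ) ≤ min(T₂, k δ) + δ`. -/
theorem min_le_min_add {T₁ T₂ : H →L[ℂ] H} (h₁ : 0 ≤ T₁) (h₂ : 0 ≤ T₂) {δ : ℝ} (hδ : 0 < δ)
    (hker : ∀ r, 0 ≤ r → ∀ x, excess T₂ r x = 0 → excess T₁ r x = 0) (k : ℕ) :
    cfc (fun t : ℝ => min t ((k + 1 : ℕ) * δ)) T₁ ≤
      cfc (fun t : ℝ => min t (k * δ)) T₂ + algebraMap ℝ (H →L[ℂ] H) δ := by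
  induction k with
  | zero =>
    have h0 : 0 ≤ cfc (fun t : ℝ => min t ((0 : ℕ) * δ)) T₂ :=
      cfc_nonneg fun t ht => le_min (spectrum_nonneg_of_nonneg h₂ ht) (by simp)
    refine le_add_of_nonneg_of_le h0 ?_
    rw [← cfc_const δ T₁]
    exact cfc_mono fun t _ => by simp
  | succ k ih =>
    rw [min_succ_eq T₁ hδ (k + 1), min_succ_eq T₂ hδ k, add_right_comm]
    refine add_le_add ih ?_
    have e : ((k + 1 : ℕ) : ℝ) * δ = k * δ + δ := by push_cast; ring
    rw [e]
    exact layer_le h₂ hδ fun x => hker _ (by positivity) x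

theorem le_of_excess {T₁ T₂ : H →L[ℂ] H} (h₁ : 0 ≤ T₁) (h₂ : 0 ≤ T₂)
    (hker : ∀ r, 0 ≤ r → ∀ x, excess T₂ r x = 0 → excess T₁ r x = 0) : T₁ ≤ T₂ := by
  have hδ (δ : ℝ) (hδ : 0 < δ) : T₁ ≤ T₂ + algebraMap ℝ (H →L[ℂ] H) δ := by
    obtain ⟨R₁, -, hs₁⟩ := exists_spectrum_bound h₁
    obtain ⟨N, hN⟩ := exists_nat_gt (R₁ / δ)
    rw [div_lt_iff₀ hδ] at hN
    calc T₁ = cfc (fun t : ℝ => min t ((N + 1 : ℕ) * δ)) T₁ := by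
          conv_lhs => rw [← cfc_id' ℝ T₁]
          refine cfc_congr fun t ht => (min_eq_left ?_).symm
          push_cast
          linarith [(hs₁ t ht).2]
      _ ≤ cfc (fun t : ℝ => min t (N * δ)) T₂ + algebraMap ℝ (H →L[ℂ] H) δ :=
          min_le_min_add h₁ h₂ hδ hker N
      _ ≤ T₂ + algebraMap ℝ (H →L[ℂ] H) δ := by
          refine add_le_add ?_ le_rfl
          conv_rhs => rw [← cfc_id' ℝ T₂]
          exact cfc_mono fun t _ => min_le_left _ _
  have hsa : IsSelfAdjoint (T₂ - T₁) := (IsSelfAdjoint.of_nonneg h₂).sub (.of_nonneg h₁)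
  rw [ContinuousLinearMap.le_def, ContinuousLinearMap.isPositive_def]
  refine ⟨hsa.isSymmetric, fun x => ?_⟩
  have hlim : Tendsto (fun δ : ℝ => (⟪T₂ x, x⟫_ℂ).re + δ * ‖x‖ ^ 2) (𝓝[>] 0)
      (𝓝 (⟪T₂ x, x⟫_ℂ).re) := by
    have : Tendsto (fun δ : ℝ => (⟪T₂ x, x⟫_ℂ).re + δ * ‖x‖ ^ 2) (𝓝 0)
        (𝓝 ((⟪T₂ x, x⟫_ℂ).re + 0 * ‖x‖ ^ 2)) :=
      Continuous.tendsto (by fun_prop) 0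
    rw [zero_mul, add_zero] at this
    exact this.mono_left nhdsWithin_le_nhds
  have h := ge_of_tendsto hlim (eventually_mem_nhdsWithin.mono fun δ h => by
    have h3 := re_inner_mono (hδ δ h) x
    rwa [add_apply, inner_add_left, Complex.add_re,
      re_inner_algebraMap] at h3)
  rw [ContinuousLinearMap.reApplyInnerSelf_apply, sub_apply, inner_sub_left,
    map_sub]
  exact sub_nonneg.2 h

end Spectral

/-- Two positive bounded operators with the same subspaces `V(·,r)` for all `r ≥ 0`
are equal. -/
theorem eq_of_V_eq {H : Type*} [NormedAddCommGroup H]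
    [InnerProductSpace ℂ H] [CompleteSpace H]
    (T₁ T₂ : H →L[ℂ] H) (h₁ : T₁.IsPositive) (h₂ : T₂.IsPositive)
    (hV : ∀ r : ℝ, 0 ≤ r →
      {x : H | atTop.limsup (fun n : ℕ => (⟪opAbs (T₁ ^ n) x, x⟫_ℂ).re ^ (1 / n : ℝ)) ≤ r} =
      {x : H | atTop.limsup (fun n : ℕ => (⟪opAbs (T₂ ^ n) x, x⟫_ℂ).re ^ (1 / n : ℝ)) ≤ r}) :
    T₁ = T₂ := by
  have p₁ : 0 ≤ T₁ := (ContinuousLinearMap.nonneg_iff_isPositive T₁).2 h₁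
  have p₂ : 0 ≤ T₂ := (ContinuousLinearMap.nonneg_iff_isPositive T₂).2 h₂
  have hker (r : ℝ) (hr : 0 ≤ r) (x : H) : excess T₁ r x = 0 ↔ excess T₂ r x = 0 := by
    rw [← limsup_le_iff_excess p₁ hr, ← limsup_le_iff_excess p₂ hr]
    exact Set.ext_iff.1 (hV r hr) x
  exact le_antisymm (le_of_excess p₁ p₂ fun r hr x => (hker r hr x).2)
    (le_of_excess p₂ p₁ fun r hr x => (hker r hr x).1)
end
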